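/- arXiv:math/9810018 — 2 statements merged into one kernel-verified Lean document; each statement's English description precedes it below -/
import Mathlib

section
/- For all integers L ≥ 0 and all integers a, [2L choose L−a]_q = ∑_{k=0}^{L} q^{binom(k,2)−binom(a,2)} · (1+q^L)/(1+q^a) · [L choose k]_q · T_1(k,a). -/
open Finset

/-- The variable `q`, realized as the generator of the field of rational functions over `ℚ`. -/
noncomputable def qq : RatFunc ℚ := RatFunc.X

/-- `(x)_n = ∏_{j=1}^n (1 - x^j)`. -/
noncomputable def qPoch (x : RatFunc ℚ) (n : ℕ) : RatFunc ℚ :=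
  ∏ j ∈ Finset.range n, (1 - x ^ (j + 1))

/-- Gaussian binomial coefficient `[n choose k]_x`, zero unless `0 ≤ k ≤ n`. -/
noncomputable def qBin (x : RatFunc ℚ) (n k : ℤ) : RatFunc ℚ :=
  if 0 ≤ k ∧ k ≤ n then qPoch x n.toNat / (qPoch x k.toNat * qPoch x (n - k).toNat) else 0

/-- The `q`-trinomial coefficient `[L, b; a]_2` in base `x`. -/
noncomputable def qTri (x : RatFunc ℚ) (L : ℕ) (b a : ℤ) : RatFunc ℚ :=
  ∑ k ∈ Finset.range (L + 1),
    x ^ ((k : ℤ) * (k + b)) * qBin x (L : ℤ) (k : ℤ) * qBin x ((L : ℤ) - k) ((k : ℤ) + a)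

/-- The `q`-trinomial `T_n(L, a)`, written in terms of `s = q^{1/2}` (so the base is `s^2`):
`T_n(L,a) = ∑ s^{r(r-n)} (s²)_L / ((s²)_{(L-a-r)/2} (s²)_{(L+a-r)/2} (s²)_r)`,
the sum over `r ≥ 0` with `L - a - r` even and `r ≤ L - |a|`; zero for `|a| > L`. -/
noncomputable def qT (s : RatFunc ℚ) (n : ℤ) (L : ℕ) (a : ℤ) : RatFunc ℚ :=
  ∑ r ∈ Finset.range (L + 1),
    if Even ((L : ℤ) - a - r) ∧ (r : ℤ) ≤ (L : ℤ) - |a| then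
      s ^ ((r : ℤ) * ((r : ℤ) - n)) * qPoch (s ^ 2) L /
        (qPoch (s ^ 2) (((L : ℤ) - a - r) / 2).toNat *
          qPoch (s ^ 2) (((L : ℤ) + a - r) / 2).toNat * qPoch (s ^ 2) r)
    else 0

/-- The Cartan matrix of the Lie algebra `A_n`. -/
def cartanA (n : ℕ) (i j : Fin n) : ℤ :=
  if i = j then 2 else if |(i : ℤ) - (j : ℤ)| = 1 then -1 else 0


/-- Inverse `q`-factorial, zero at negative integers. -/
noncomputable def fI (x : RatFunc ℚ) (n : ℤ) : RatFunc ℚ :=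
  if n < 0 then 0 else (qPoch x n.toNat)⁻¹

lemma fI_neg (x : RatFunc ℚ) {n : ℤ} (h : n < 0) : fI x n = 0 := by simp [fI, h]

lemma fI_nat (x : RatFunc ℚ) (n : ℕ) : fI x n = (qPoch x n)⁻¹ := by simp [fI]

lemma fI_nonneg (x : RatFunc ℚ) {n : ℤ} (h : 0 ≤ n) : fI x n = (qPoch x n.toNat)⁻¹ := by
  simp [fI, not_lt.mpr h]

lemma qPoch_succ (x : RatFunc ℚ) (n : ℕ) :
    qPoch x (n + 1) = qPoch x n * (1 - x ^ (n + 1)) := by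
  simp [qPoch, Finset.prod_range_succ]

lemma qPoch_ne (x : RatFunc ℚ) (hx : ∀ j : ℕ, 1 - x ^ (j + 1) ≠ 0) (n : ℕ) : qPoch x n ≠ 0 :=
  Finset.prod_ne_zero_iff.mpr fun j _ => hx j

lemma fI_rec (x : RatFunc ℚ) (hx : ∀ j : ℕ, 1 - x ^ (j + 1) ≠ 0) (n : ℤ) :
    fI x (n - 1) = (1 - x ^ n) * fI x n := by
  rcases lt_trichotomy n 0 with h | h | h
  · rw [fI_neg x h, fI_neg x (by omega)]; simp
  · subst h; rw [fI_neg x (by omega)]; simp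
  · obtain ⟨m, rfl⟩ : ∃ m : ℕ, n = ((m + 1 : ℕ) : ℤ) := ⟨(n - 1).toNat, by omega⟩
    have e : (((m + 1 : ℕ) : ℤ) - 1) = (m : ℤ) := by push_cast; ring
    rw [e, fI_nat, fI_nat, qPoch_succ, zpow_natCast]
    have := qPoch_ne x hx m
    have := hx m
    field_simp

/-- `q`-Chu-Vandermonde. -/
lemma vander (x : RatFunc ℚ) (h0 : x ≠ 0) (hx : ∀ j : ℕ, 1 - x ^ (j + 1) ≠ 0) (B : ℕ) (n : ℕ) :
    ∀ (a : ℤ) (N : ℕ), n < N →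
    ∑ m ∈ range N, x ^ ((m : ℤ) * (m + a)) * fI x m * fI x (n - m) * fI x (m + a) *
      fI x (B - a - m) = qPoch x (n + B) * fI x n * fI x B * fI x (n + a) * fI x (B - a) := by
  induction n with
  | zero =>
    intro a N hN
    obtain ⟨M, rfl⟩ : ∃ M, N = M + 1 := ⟨N - 1, by omega⟩
    rw [Finset.sum_range_succ', Finset.sum_eq_zero]
    · have h1 : fI x 0 = 1 := by simp [fI, qPoch]
      have := qPoch_ne x hx B
      simp only [Nat.cast_zero, zero_add, sub_zero, zero_mul, zpow_zero, h1, fI_nat]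
      field_simp
    · intro m _
      rw [fI_neg x (n := ((0 : ℕ) : ℤ) - ((m + 1 : ℕ) : ℤ)) (by push_cast; omega)]
      simp
  | succ n ih =>
    intro a N hN
    obtain ⟨M, rfl⟩ : ∃ M, N = M + 1 := ⟨N - 1, by omega⟩
    have i1 := ih a (M + 1) (by omega)
    have i2 := ih (a + 1) M (by omega)
    apply mul_left_cancel₀ (hx n)
    have key : (1 - x ^ (n + 1)) * ∑ m ∈ range (M + 1), x ^ ((m : ℤ) * (m + a)) * fI x m *
        fI x (((n + 1 : ℕ) : ℤ) - m) * fI x (m + a) * fI x (B - a - m) =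
        (∑ m ∈ range (M + 1), x ^ ((m : ℤ) * (m + a)) * fI x m * fI x (n - m) * fI x (m + a) *
          fI x (B - a - m)) +
        x ^ ((n : ℤ) + 1 + a) * ∑ m ∈ range M, x ^ ((m : ℤ) * (m + (a + 1))) * fI x m *
          fI x (n - m) * fI x (m + (a + 1)) * fI x (B - (a + 1) - m) := by
      have shift : x ^ ((n : ℤ) + 1 + a) * ∑ m ∈ range M, x ^ ((m : ℤ) * (m + (a + 1))) * fI x m *
          fI x (n - m) * fI x (m + (a + 1)) * fI x (B - (a + 1) - m) =
          ∑ m ∈ range (M + 1), x ^ ((m : ℤ) * (m + a) + ((n : ℤ) + 1 - m)) * fI x ((m : ℤ) - 1) *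
            fI x ((n : ℤ) + 1 - m) * fI x (m + a) * fI x (B - a - m) := by
        rw [Finset.sum_range_succ', Finset.mul_sum]
        rw [fI_neg x (n := ((0 : ℕ) : ℤ) - 1) (by simp)]
        simp only [mul_zero, zero_mul, add_zero]
        refine Finset.sum_congr rfl fun m _ => ?_
        push_cast
        have e1 : ((m : ℤ) + 1) * (m + 1 + a) + ((n : ℤ) + 1 - (m + 1)) =
          ((n : ℤ) + 1 + a) + (m : ℤ) * (m + (a + 1)) := by ring
        have e2 : (m : ℤ) + 1 - 1 = m := by ring
        have e3 : (n : ℤ) + 1 - (m + 1) = n - m := by ring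
        have e4 : (m : ℤ) + 1 + a = m + (a + 1) := by ring
        have e5 : (B : ℤ) - a - (m + 1) = B - (a + 1) - m := by ring
        rw [e1, e2, e3, e4, e5, zpow_add₀ h0 ((n : ℤ) + 1 + a)]
        ring
      rw [shift, ← Finset.sum_add_distrib, Finset.mul_sum]
      refine Finset.sum_congr rfl fun m _ => ?_
      have r1 := fI_rec x hx m
      have r2 := fI_rec x hx ((n : ℤ) + 1 - m)
      have e : (n : ℤ) + 1 - m - 1 = n - m := by ring
      rw [e] at r2
      have p : x ^ (n + 1) = x ^ ((n : ℤ) + 1 - m) * x ^ (m : ℤ) := by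
        rw [← zpow_add₀ h0, ← zpow_natCast]; congr 1; push_cast; ring
      rw [r1, r2, p, zpow_add₀ h0]
      push_cast
      ring
    rw [key, i1, i2]
    have r1 := fI_rec x hx ((n : ℤ) + 1)
    have r2 := fI_rec x hx ((n : ℤ) + 1 + a)
    have r3 := fI_rec x hx ((B : ℤ) - a)
    have e1 : (n : ℤ) + 1 - 1 = n := by ring
    have e2 : (n : ℤ) + 1 + a - 1 = n + a := by ring
    have e3 : (n : ℤ) + (a + 1) = n + 1 + a := by ring
    have e4 : (B : ℤ) - (a + 1) = B - a - 1 := by ring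
    have e5 : n + 1 + B = (n + B) + 1 := by ring
    rw [e1] at r1
    rw [e2] at r2
    rw [e3, e4, e5, qPoch_succ]
    push_cast
    rw [r1, r2, r3]
    have p : x ^ (n + B + 1) = x ^ ((n : ℤ) + 1 + a) * x ^ ((B : ℤ) - a) := by
      rw [← zpow_add₀ h0, ← zpow_natCast]; congr 1; push_cast; ring
    have p2 : x ^ ((n : ℤ) + 1) = x ^ (n + 1) := by
      rw [← zpow_natCast]; push_cast; rfl
    rw [p, p2]
    ring

lemma tele (x : RatFunc ℚ) (h0 : x ≠ 0) (hx : ∀ j : ℕ, 1 - x ^ (j + 1) ≠ 0) (L : ℕ) (a : ℤ) :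
    (1 + x ^ (L : ℤ)) * ∑ n ∈ range (L + 1), x ^ ((n : ℤ) * (n + a - 1)) * (fI x n * fI x (L - n) *
      fI x (n + a) * fI x (L - a - n)) =
    (1 + x ^ a) * ∑ n ∈ range (L + 1), x ^ ((n : ℤ) * (n + a)) * fI x n * fI x (L - n) *
      fI x (n + a) * fI x (L - a - n) := by
  rcases Nat.eq_zero_or_pos L with rfl | hL
  · by_cases ha : a = 0
    · subst ha; simp
    · rcases lt_or_gt_of_ne ha with h | h
      · simp [fI_neg x h]
      · have : -a < 0 := by omega
        simp [fI_neg x this]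
  obtain ⟨l, rfl⟩ : ∃ l, L = l + 1 := ⟨L - 1, by omega⟩
  have hl := hx l
  generalize hL' : l + 1 = L at *
  apply mul_left_cancel₀ hl
  rw [← sub_eq_zero, Finset.mul_sum, Finset.mul_sum, Finset.mul_sum, Finset.mul_sum,
    ← Finset.sum_sub_distrib]
  let G : ℕ → RatFunc ℚ := fun n => x ^ ((n : ℤ) * (n + a - 1)) * fI x ((n : ℤ) - 1) *
    fI x ((L : ℤ) - n) * fI x ((n : ℤ) + a - 1) * fI x (L - a - n)
  have hG : ∀ n ∈ range (L + 1), (1 - x ^ L) * ((1 + x ^ (L : ℤ)) * (x ^ ((n : ℤ) * (n + a - 1)) *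
      (fI x n * fI x (L - n) * fI x (n + a) * fI x (L - a - n)))) -
      (1 - x ^ L) * ((1 + x ^ a) * (x ^ ((n : ℤ) * (n + a)) * fI x n * fI x (L - n) *
      fI x (n + a) * fI x (L - a - n))) = G n - G (n + 1) := by
    intro n _
    simp only [G]
    push_cast
    have e1 : (n : ℤ) + 1 - 1 = n := by ring
    have e2 : (n : ℤ) + 1 + a - 1 = n + a := by ring
    have e3 : (L : ℤ) - (n + 1) = L - n - 1 := by ring
    have e4 : (L : ℤ) - a - (n + 1) = L - a - n - 1 := by ring
    have e5 : ((n : ℤ) + 1) * (n + a) = n * (n + a - 1) + n + n + a := by ring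
    have e6 : (n : ℤ) * (n + a) = n * (n + a - 1) + n := by ring
    rw [e1, e2, e3, e4, e5, e6]
    rw [fI_rec x hx n, fI_rec x hx ((n : ℤ) + a), fI_rec x hx ((L : ℤ) - n),
      fI_rec x hx ((L : ℤ) - a - n)]
    simp only [zpow_add₀ h0, zpow_sub₀ h0]
    have := zpow_ne_zero (n : ℤ) h0
    have := zpow_ne_zero a h0
    rw [← zpow_natCast x L]
    generalize x ^ ((n : ℤ) * (n + a - 1)) = Y at *
    generalize x ^ (n : ℤ) = u at *
    generalize x ^ (L : ℤ) = w at *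
    generalize x ^ a = v at *
    field_simp
    ring
  rw [Finset.sum_congr rfl hG, Finset.sum_range_sub']
  have g0 : G 0 = 0 := by
    simp only [G]; rw [fI_neg x (n := ((0 : ℕ) : ℤ) - 1) (by simp)]; simp
  have g1 : G (L + 1) = 0 := by
    simp only [G]; rw [fI_neg x (n := (L : ℤ) - ((L + 1 : ℕ) : ℤ)) (by push_cast; omega)]; simp
  rw [g0, g1, sub_zero]

lemma qBin_eq (x : RatFunc ℚ) (n : ℕ) (k : ℤ) :
    qBin x n k = qPoch x n * fI x k * fI x (n - k) := by
  unfold qBin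
  split_ifs with h
  · rw [fI_nonneg x h.1, fI_nonneg x (by omega)]
    rw [Int.toNat_natCast, div_eq_mul_inv, mul_inv, mul_assoc]
  · rcases lt_or_ge k 0 with h' | h'
    · simp [fI_neg x h']
    · rw [fI_neg x (n := n - k) (by omega)]; simp

lemma qT_eq (s : RatFunc ℚ) (k : ℕ) (a : ℤ) (N : ℕ) (hN : k < N) :
    qT s 1 k a = ∑ r ∈ range N, if Even ((k : ℤ) - a - r) then
      s ^ ((r : ℤ) * (r - 1)) * qPoch (s ^ 2) k * (fI (s ^ 2) (((k : ℤ) - a - r) / 2) *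
        fI (s ^ 2) (((k : ℤ) + a - r) / 2) * fI (s ^ 2) r) else 0 := by
  unfold qT
  rw [← Finset.sum_subset (Finset.range_subset_range.mpr (show k + 1 ≤ N by omega))]
  · refine Finset.sum_congr rfl fun r _ => ?_
    by_cases he : Even ((k : ℤ) - a - r)
    · by_cases hr : (r : ℤ) ≤ k - |a|
      · rw [if_pos ⟨he, hr⟩, if_pos he]
        have h1 := le_abs_self a
        have h2 := neg_abs_le a
        rw [fI_nonneg _ (n := ((k : ℤ) - a - r) / 2) (by omega),
          fI_nonneg _ (n := ((k : ℤ) + a - r) / 2) (by omega), fI_nat, div_eq_mul_inv,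
          mul_inv, mul_inv]
      · rw [if_neg (fun h => hr h.2), if_pos he]
        rcases abs_cases a with h | h
        · rw [fI_neg _ (n := ((k : ℤ) - a - r) / 2) (by omega)]; simp
        · rw [fI_neg _ (n := ((k : ℤ) + a - r) / 2) (by omega)]; simp
    · rw [if_neg (fun h => he h.1), if_neg he]
  · intro r _ hr
    simp only [Finset.mem_range, not_lt] at hr
    split_ifs
    · rcases le_or_gt 0 a with h | h
      · rw [fI_neg _ (n := ((k : ℤ) - a - r) / 2) (by omega)]; simp
      · rw [fI_neg _ (n := ((k : ℤ) + a - r) / 2) (by omega)]; simp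
    · rfl

lemma fI_ne_nonneg {x : RatFunc ℚ} {n : ℤ} (h : fI x n ≠ 0) : 0 ≤ n := by
  by_contra h'
  exact h (fI_neg x (by omega))

lemma reindex (s : RatFunc ℚ) (h0 : s ≠ 0) (L : ℕ) (a : ℤ) :
    (∑ p ∈ range (L + 1) ×ˢ range (L + 1), if Even ((p.1 : ℤ) - a - p.2) then
      s ^ ((p.1 : ℤ) * (p.1 - 1) - a * (a - 1)) * s ^ ((p.2 : ℤ) * (p.2 - 1)) *
      (fI (s ^ 2) (L - p.1) * fI (s ^ 2) (((p.1 : ℤ) - a - p.2) / 2) *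
        fI (s ^ 2) (((p.1 : ℤ) + a - p.2) / 2) * fI (s ^ 2) p.2) else 0) =
    ∑ p ∈ range (L + 1) ×ˢ range (L + 1), (s ^ 2) ^ ((p.1 : ℤ) * (p.1 + a - 1)) *
      ((s ^ 2) ^ ((p.2 : ℤ) * (p.2 + a)) * fI (s ^ 2) p.2 * fI (s ^ 2) (p.1 - p.2) *
        fI (s ^ 2) (p.2 + a) * fI (s ^ 2) (((L - p.1 : ℕ) : ℤ) - a - p.2)) := by
  refine Finset.sum_bij_ne_zero
    (fun p _ _ => ((((p.1 : ℤ) - a + p.2) / 2).toNat, (((p.1 : ℤ) - a - p.2) / 2).toNat))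
    ?_ ?_ ?_ ?_
  · rintro ⟨k, r⟩ hm hne
    have he : Even ((k : ℤ) - a - r) := by
      by_contra h; simp [h] at hne
    simp only [he, if_true] at hne
    simp only [ne_eq, mul_eq_zero, not_or] at hne
    obtain ⟨_, ⟨⟨n1, n2⟩, n3⟩, n4⟩ := hne
    have n2 := fI_ne_nonneg n2
    have n3 := fI_ne_nonneg n3
    simp only [Finset.mem_product, Finset.mem_range] at hm ⊢
    obtain ⟨t, ht⟩ := he
    omega
  · rintro ⟨k, r⟩ hm hne ⟨k', r'⟩ hm' hne' heq
    have he : Even ((k : ℤ) - a - r) := by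
      by_contra h; simp [h] at hne
    have he' : Even ((k' : ℤ) - a - r') := by
      by_contra h; simp [h] at hne'
    simp only [he, if_true] at hne
    simp only [he', if_true] at hne'
    simp only [ne_eq, mul_eq_zero, not_or] at hne hne'
    obtain ⟨_, ⟨⟨n1, n2⟩, n3⟩, n4⟩ := hne
    obtain ⟨_, ⟨⟨n1', n2'⟩, n3'⟩, n4'⟩ := hne'
    have n2 := fI_ne_nonneg n2
    have n2' := fI_ne_nonneg n2'
    obtain ⟨t, ht⟩ := he
    obtain ⟨t', ht'⟩ := he'
    simp only [Prod.mk.injEq] at heq ⊢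
    omega
  · rintro ⟨n, m⟩ hm hne
    have hne0 := hne
    simp only [ne_eq, mul_eq_zero, not_or] at hne
    obtain ⟨_, ⟨⟨⟨_, n1⟩, n2⟩, n3⟩, n4⟩ := hne
    have n2' := fI_ne_nonneg n2
    have n3' := fI_ne_nonneg n3
    have n4' := fI_ne_nonneg n4
    simp only [Finset.mem_product, Finset.mem_range] at hm
    obtain ⟨k, hk⟩ : ∃ k : ℕ, (k : ℤ) = n + m + a := ⟨((n : ℤ) + m + a).toNat, by omega⟩
    obtain ⟨r, hr⟩ : ∃ r : ℕ, (r : ℤ) = n - m := ⟨((n : ℤ) - m).toNat, by omega⟩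
    refine ⟨(k, r), ?_, ?_, ?_⟩
    · simp only [Finset.mem_product, Finset.mem_range]; omega
    · have he : Even ((k : ℤ) - a - r) := ⟨m, by omega⟩
      simp only [he, if_true]
      have e1 : ((k : ℤ) - a - r) / 2 = m := by omega
      have e2 : ((k : ℤ) + a - r) / 2 = m + a := by omega
      have e3 : (L : ℤ) - k = ((L - n : ℕ) : ℤ) - a - m := by omega
      rw [e1, e2, e3, hr]
      have := zpow_ne_zero ((k : ℤ) * (k - 1) - a * (a - 1)) h0
      have := zpow_ne_zero (((n : ℤ) - m) * (n - m - 1)) h0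
      simp only [ne_eq, mul_eq_zero, not_or]
      tauto
    · simp only [Prod.mk.injEq]; omega
  · rintro ⟨k, r⟩ hm hne
    have he : Even ((k : ℤ) - a - r) := by
      by_contra h; simp [h] at hne
    simp only [he, if_true] at hne ⊢
    simp only [ne_eq, mul_eq_zero, not_or] at hne
    obtain ⟨_, ⟨⟨n1, n2⟩, n3⟩, n4⟩ := hne
    have n2 := fI_ne_nonneg n2
    have n3 := fI_ne_nonneg n3
    simp only [Finset.mem_product, Finset.mem_range] at hm
    obtain ⟨t, ht⟩ := he
    obtain ⟨m, hm'⟩ : ∃ m : ℕ, (m : ℤ) = t := ⟨t.toNat, by omega⟩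
    have e1 : ((k : ℤ) - a - r) / 2 = m := by omega
    have e2 : ((k : ℤ) + a - r) / 2 = m + a := by omega
    have e3 : (((k : ℤ) - a + r) / 2).toNat = m + r := by omega
    have hk : (k : ℤ) = m + r + m + a := by omega
    have e4 : ((L - (m + r) : ℕ) : ℤ) - a - m = L - k := by omega
    rw [e1, e2, e3, Int.toNat_natCast, e4]
    have e5 : ((m + r : ℕ) : ℤ) - m = r := by push_cast; ring
    rw [e5]
    have p : s ^ ((k : ℤ) * (k - 1) - a * (a - 1)) * s ^ ((r : ℤ) * (r - 1)) =
        (s ^ 2) ^ (((m + r : ℕ) : ℤ) * (((m + r : ℕ) : ℤ) + a - 1)) *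
          (s ^ 2) ^ ((m : ℤ) * (m + a)) := by
      rw [← zpow_natCast s 2, ← zpow_mul, ← zpow_mul, ← zpow_add₀ h0, ← zpow_add₀ h0, hk]
      congr 1
      push_cast
      ring
    rw [p]
    ring

lemma qq_ne : qq ≠ 0 := RatFunc.X_ne_zero

lemma qq_pow (n : ℕ) (h : qq ^ (n + 1) = 1) : False := by
  have h2 : algebraMap (Polynomial ℚ) (RatFunc ℚ) (Polynomial.X ^ (n + 1)) =
      algebraMap (Polynomial ℚ) (RatFunc ℚ) 1 := by
    rw [map_pow, map_one, RatFunc.algebraMap_X]; exact h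
  have h3 := RatFunc.algebraMap_injective ℚ h2
  have h4 := congrArg Polynomial.natDegree h3
  simp at h4

lemma hx_qq (j : ℕ) : 1 - (qq ^ 2) ^ (j + 1) ≠ 0 := by
  intro h
  rw [← pow_mul] at h
  exact qq_pow (2 * j + 1) (by rw [show 2 * j + 1 + 1 = 2 * (j + 1) by ring]; exact (sub_eq_zero.mp h).symm)

lemma one_add_ne (a : ℤ) : 1 + (qq ^ 2) ^ a ≠ 0 := by
  have key : ∀ b : ℕ, (qq ^ 2) ^ b ≠ -1 := by
    intro b h
    rcases Nat.eq_zero_or_pos b with rfl | hb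
    · norm_num at h
    · obtain ⟨c, rfl⟩ : ∃ c, b = c + 1 := ⟨b - 1, by omega⟩
      refine qq_pow (4 * c + 3) ?_
      have : qq ^ (4 * c + 3 + 1) = ((qq ^ 2) ^ (c + 1)) ^ 2 := by
        rw [← pow_mul, ← pow_mul]; congr 1; ring
      rw [this, h]; norm_num
  intro h
  have h' : (qq ^ 2) ^ a = -1 := by linear_combination h
  rcases Int.eq_nat_or_neg a with ⟨b, rfl | rfl⟩
  · rw [zpow_natCast] at h'; exact key b h'
  · rw [zpow_neg, zpow_natCast] at h'
    exact key b (by rw [← inv_inv ((qq ^ 2) ^ b), h']; norm_num)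

theorem stmt7 (L : ℕ) (a : ℤ) :
    qBin (qq ^ 2) (2 * (L : ℤ)) ((L : ℤ) - a) =
      ∑ k ∈ Finset.range (L + 1),
        qq ^ ((k : ℤ) * ((k : ℤ) - 1) - a * (a - 1)) *
          ((1 + (qq ^ 2) ^ (L : ℤ)) / (1 + (qq ^ 2) ^ a)) *
          qBin (qq ^ 2) (L : ℤ) (k : ℤ) * qT qq 1 k a := by
  have h0 : qq ^ 2 ≠ 0 := pow_ne_zero 2 qq_ne
  have hx := hx_qq
  have hPL := qPoch_ne _ hx L
  have ha := one_add_ne a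
  have step1 : ∑ k ∈ Finset.range (L + 1),
        qq ^ ((k : ℤ) * ((k : ℤ) - 1) - a * (a - 1)) *
          ((1 + (qq ^ 2) ^ (L : ℤ)) / (1 + (qq ^ 2) ^ a)) *
          qBin (qq ^ 2) (L : ℤ) (k : ℤ) * qT qq 1 k a =
      ((1 + (qq ^ 2) ^ (L : ℤ)) / (1 + (qq ^ 2) ^ a)) * qPoch (qq ^ 2) L *
      (∑ p ∈ range (L + 1) ×ˢ range (L + 1), if Even ((p.1 : ℤ) - a - p.2) then
      qq ^ ((p.1 : ℤ) * (p.1 - 1) - a * (a - 1)) * qq ^ ((p.2 : ℤ) * (p.2 - 1)) *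
      (fI (qq ^ 2) (L - p.1) * fI (qq ^ 2) (((p.1 : ℤ) - a - p.2) / 2) *
        fI (qq ^ 2) (((p.1 : ℤ) + a - p.2) / 2) * fI (qq ^ 2) p.2) else 0) := by
    rw [Finset.sum_product, Finset.mul_sum]
    refine Finset.sum_congr rfl fun k hk => ?_
    rw [qT_eq qq k a (L + 1) (Finset.mem_range.mp hk), qBin_eq, Finset.mul_sum, Finset.mul_sum]
    refine Finset.sum_congr rfl fun r _ => ?_
    split_ifs
    · rw [fI_nat _ k]
      have := qPoch_ne _ hx k
      field_simp
    · simp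
  have step2 : (∑ p ∈ range (L + 1) ×ˢ range (L + 1),
      (qq ^ 2) ^ ((p.1 : ℤ) * (p.1 + a - 1)) *
      ((qq ^ 2) ^ ((p.2 : ℤ) * (p.2 + a)) * fI (qq ^ 2) p.2 * fI (qq ^ 2) (p.1 - p.2) *
        fI (qq ^ 2) (p.2 + a) * fI (qq ^ 2) (((L - p.1 : ℕ) : ℤ) - a - p.2))) =
      qPoch (qq ^ 2) L * ∑ n ∈ range (L + 1), (qq ^ 2) ^ ((n : ℤ) * (n + a - 1)) *
        (fI (qq ^ 2) n * fI (qq ^ 2) (L - n) * fI (qq ^ 2) (n + a) * fI (qq ^ 2) (L - a - n)) := by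
    rw [Finset.sum_product, Finset.mul_sum]
    refine Finset.sum_congr rfl fun n hn => ?_
    have hn' := Finset.mem_range.mp hn
    simp only []
    rw [← Finset.mul_sum, vander _ h0 hx (L - n) n a (L + 1) hn']
    have e1 : n + (L - n) = L := by omega
    have e2 : ((L - n : ℕ) : ℤ) = L - n := by omega
    have e3 : (L : ℤ) - n - a = L - a - n := by ring
    rw [e1, e2, e3]
    ring
  have t := tele _ h0 hx L a
  rw [vander _ h0 hx L L a (L + 1) (by omega)] at t
  rw [step1, reindex qq qq_ne, step2]
  have e : (2 * (L : ℤ)) = ((L + L : ℕ) : ℤ) := by push_cast; ring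
  rw [e, qBin_eq]
  have e2 : ((L + L : ℕ) : ℤ) - (L - a) = L + a := by push_cast; ring
  rw [e2]
  generalize (∑ n ∈ range (L + 1), (qq ^ 2) ^ ((n : ℤ) * (n + a - 1)) *
        (fI (qq ^ 2) n * fI (qq ^ 2) (L - n) * fI (qq ^ 2) (n + a) *
        fI (qq ^ 2) (L - a - n))) = S at *
  rw [fI_nat _ L] at t
  generalize (qq ^ 2) ^ (L : ℤ) = w at *
  generalize (qq ^ 2) ^ a = v at *
  have t2 : (1 + w) / (1 + v) * qPoch (qq ^ 2) L * (qPoch (qq ^ 2) L * S) =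
    qPoch (qq ^ 2) L * qPoch (qq ^ 2) L * ((1 + w) * S) / (1 + v) := by ring
  rw [t2, t]
  field_simp
end

section
/- For every integer L ≥ 0, ∑_{n≥0} q^{n²} [L−n choose n]_q = ∑_{j∈ℤ} ( q^{j(10j+1)} [L; 5j]_2 − q^{(2j+1)(5j+2)} [L; 5j+2]_2 ), where [L; a]_2 := [L, a; a]_2 is the q-trinomial coefficient. -/
open Finset

lemma qq_pow_ne (n : ℕ) (hn : n ≠ 0) : (1 : RatFunc ℚ) - qq ^ n ≠ 0 := by
  intro h
  have h1 : qq ^ n = 1 := (sub_eq_zero.mp h).symm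
  have h2 : (algebraMap (Polynomial ℚ) (RatFunc ℚ)) (Polynomial.X ^ n) =
      algebraMap (Polynomial ℚ) (RatFunc ℚ) 1 := by
    rw [map_pow, map_one, RatFunc.algebraMap_X]; exact h1
  have h3 := RatFunc.algebraMap_injective ℚ h2
  have h4 := congrArg Polynomial.natDegree h3
  simp at h4
  exact hn h4

lemma qq_zpow_ne (n : ℤ) (hn : 0 < n) : (1 : RatFunc ℚ) - qq ^ n ≠ 0 := by
  lift n to ℕ using hn.le
  rw [zpow_natCast]
  exact qq_pow_ne n (by omega)

lemma qPoch_ne_s11 (n : ℕ) : qPoch qq n ≠ 0 := by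
  unfold qPoch
  exact Finset.prod_ne_zero_iff.mpr fun j _ => qq_pow_ne _ (by omega)

/-- q-multinomial with integer arguments -/
noncomputable def MM (k l r : ℤ) : RatFunc ℚ :=
  if 0 ≤ k ∧ 0 ≤ l ∧ 0 ≤ r then
    qPoch qq (k + l + r).toNat / (qPoch qq k.toNat * qPoch qq l.toNat * qPoch qq r.toNat) else 0

lemma MM_zero (k l r : ℤ) (h : ¬ (0 ≤ k ∧ 0 ≤ l ∧ 0 ≤ r)) : MM k l r = 0 := by
  unfold MM; rw [if_neg h]

lemma MM_comm12 (k l r : ℤ) : MM k l r = MM l k r := by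
  unfold MM
  rw [show l + k + r = k + l + r by ring, mul_comm (qPoch qq l.toNat)]
  congr 1
  exact propext ⟨fun h => ⟨h.2.1, h.1, h.2.2⟩, fun h => ⟨h.2.1, h.1, h.2.2⟩⟩

lemma MM_comm13 (k l r : ℤ) : MM k l r = MM r l k := by
  unfold MM
  rw [show r + l + k = k + l + r by ring, show qPoch qq r.toNat * qPoch qq l.toNat * qPoch qq k.toNat
    = qPoch qq k.toNat * qPoch qq l.toNat * qPoch qq r.toNat by ring]
  congr 1
  exact propext ⟨fun h => ⟨h.2.2, h.2.1, h.1⟩, fun h => ⟨h.2.2, h.2.1, h.1⟩⟩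

lemma qPoch_succ_int (n : ℤ) (hn : 0 < n) :
    qPoch qq n.toNat = qPoch qq (n - 1).toNat * (1 - qq ^ n) := by
  obtain ⟨m, rfl⟩ : ∃ m : ℕ, n = m + 1 := ⟨(n - 1).toNat, by omega⟩
  have h1 : ((m : ℤ) + 1).toNat = m + 1 := by omega
  have h2 : ((m : ℤ) + 1 - 1).toNat = m := by omega
  rw [h1, h2]
  unfold qPoch
  rw [Finset.prod_range_succ]
  norm_cast

lemma MM_k (k l r : ℤ) : (1 - qq ^ (k + l + r)) * MM (k - 1) l r = (1 - qq ^ k) * MM k l r := by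
  by_cases h : 0 < k ∧ 0 ≤ l ∧ 0 ≤ r
  · unfold MM
    rw [if_pos (by omega), if_pos (by omega), qPoch_succ_int (k + l + r) (by omega),
      qPoch_succ_int k (by omega), show k - 1 + l + r = k + l + r - 1 by ring]
    have := qPoch_ne_s11 (k - 1).toNat
    have := qPoch_ne_s11 l.toNat
    have := qPoch_ne_s11 r.toNat
    have := qq_zpow_ne k h.1
    field_simp
  · rw [MM_zero (k - 1) l r (by omega)]
    by_cases hk : k = 0
    · subst hk; simp
    · rw [MM_zero k l r (by omega)]; simp

lemma MM_l (k l r : ℤ) : (1 - qq ^ (k + l + r)) * MM k (l - 1) r = (1 - qq ^ l) * MM k l r := by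
  rw [MM_comm12 k, MM_comm12 k, ← MM_k, add_comm l k]

lemma MM_r (k l r : ℤ) : (1 - qq ^ (k + l + r)) * MM k l (r - 1) = (1 - qq ^ r) * MM k l r := by
  rw [MM_comm13 k, MM_comm13 k, ← MM_k, show k + l + r = r + l + k by ring]

/-- general recurrence -/
lemma MM_rec (k l r : ℤ) (h : k + l + r ≠ 0) :
    MM k l r = MM k l (r - 1) + qq ^ r * MM (k - 1) l r + qq ^ (r + k) * MM k (l - 1) r := by
  by_cases hp : 0 < k + l + r
  · apply mul_left_cancel₀ (qq_zpow_ne _ hp)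
    have h1 := MM_k k l r
    have h2 := MM_l k l r
    have h3 := MM_r k l r
    have e1 : qq ^ (k + l + r) = qq ^ k * qq ^ l * qq ^ r := by
      rw [zpow_add₀ qq_ne, zpow_add₀ qq_ne]
    have e2 : qq ^ (r + k) = qq ^ r * qq ^ k := zpow_add₀ qq_ne _ _
    rw [e2]
    linear_combination -h3 - qq ^ r * h1 - qq ^ r * qq ^ k * h2 - MM k l r * e1
  · rw [MM_zero k l r (by omega), MM_zero k l (r - 1) (by omega), MM_zero (k - 1) l r (by omega),
      MM_zero k (l - 1) r (by omega)]
    simp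

/-- general recurrence, second ordering -/
lemma MM_rec2 (k l r : ℤ) (h : k + l + r ≠ 0) :
    MM k l r = MM k (l - 1) r + qq ^ l * MM k l (r - 1) + qq ^ (l + r) * MM (k - 1) l r := by
  by_cases hp : 0 < k + l + r
  · apply mul_left_cancel₀ (qq_zpow_ne _ hp)
    have h1 := MM_k k l r
    have h2 := MM_l k l r
    have h3 := MM_r k l r
    have e1 : qq ^ (k + l + r) = qq ^ k * qq ^ l * qq ^ r := by
      rw [zpow_add₀ qq_ne, zpow_add₀ qq_ne]
    have e2 : qq ^ (l + r) = qq ^ l * qq ^ r := zpow_add₀ qq_ne _ _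
    rw [e2]
    linear_combination -h2 - qq ^ l * h3 - qq ^ l * qq ^ r * h1 - MM k l r * e1
  · rw [MM_zero k l r (by omega), MM_zero k l (r - 1) (by omega), MM_zero (k - 1) l r (by omega),
      MM_zero k (l - 1) r (by omega)]
    simp

lemma fin_of (f : ℤ → RatFunc ℚ) (A B : ℤ) (h : ∀ k, ¬ (A ≤ k ∧ k ≤ B) → f k = 0) :
    f.HasFiniteSupport := by
  apply (Set.finite_Icc A B).subset
  intro k hk
  by_contra hc
  exact hk (h k hc)

lemma fin_add {f g : ℤ → RatFunc ℚ} (hf : f.HasFiniteSupport) (hg : g.HasFiniteSupport) :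
    (fun i => f i + g i).HasFiniteSupport := hf.add hg

/-- summand -/
noncomputable def tm (n b a k : ℤ) : RatFunc ℚ := qq ^ (k * (k + b)) * MM k (k + a) (n - 2 * k - a)

/-- trinomial -/
noncomputable def SS (n b a : ℤ) : RatFunc ℚ := ∑ᶠ k : ℤ, tm n b a k

lemma tm_fin (n b a c d : ℤ) (x : RatFunc ℚ) :
    (fun k => x * tm n b a (k + c)).HasFiniteSupport := by
  refine fin_of _ (-(c.natAbs : ℤ) - (n.natAbs : ℤ) - (a.natAbs : ℤ)) ((c.natAbs : ℤ) + (n.natAbs : ℤ) + (a.natAbs : ℤ)) fun k hk => ?_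
  unfold tm
  rw [MM_zero _ _ _ (by omega)]
  simp

lemma SS_shift (n b a c : ℤ) (x : RatFunc ℚ) : ∑ᶠ k : ℤ, x * tm n b a (k + c) = x * SS n b a := by
  have h := finsum_comp_equiv (Equiv.addRight c) (f := fun k => x * tm n b a k)
  simp only [Equiv.coe_addRight] at h
  rw [h, SS, mul_finsum]

lemma SS_zero (n b a : ℤ) (h : ¬ (-n ≤ a ∧ a ≤ n)) : SS n b a = 0 := by
  unfold SS
  rw [← finsum_zero (α := ℤ)]
  congr 1; ext1 k
  unfold tm
  rw [MM_zero _ _ _ (by omega), mul_zero]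

lemma SS_R1 (n a : ℤ) (hn : n ≠ 0) : SS n a a = SS (n - 1) a a + qq ^ (n - 1) * SS (n - 1) a (a + 1)
    + qq ^ (n - a) * SS (n - 1) (a - 1) (a - 1) := by
  rw [← one_mul (SS (n - 1) a a), ← SS_shift (n - 1) a a 0, ← SS_shift (n - 1) a (a + 1) (-1),
    ← SS_shift (n - 1) (a - 1) (a - 1) 0, ← finsum_add_distrib (tm_fin _ _ _ _ 0 _) (tm_fin _ _ _ _ 0 _),
    ← finsum_add_distrib (fin_add (tm_fin _ _ _ _ 0 _) (tm_fin _ _ _ _ 0 _)) (tm_fin _ _ _ _ 0 _)]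
  unfold SS
  congr 1; ext1 k
  unfold tm
  rw [MM_rec _ _ _ (by omega), mul_add, mul_add, one_mul]
  simp only [← mul_assoc, ← zpow_add₀ qq_ne]
  congr 1
  · congr 1
    · ring_nf
    · ring_nf
  · ring_nf

lemma SS_R2 (n a : ℤ) (hn : n ≠ 0) : SS n a (a + 1) = SS (n - 1) a a +
    qq ^ (a + 1) * SS (n - 1) (a + 1) (a + 1) + qq ^ (n + a) * SS (n - 1) (a + 1) (a + 2) := by
  rw [← one_mul (SS (n - 1) a a), ← SS_shift (n - 1) a a 0, ← SS_shift (n - 1) (a + 1) (a + 1) 0,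
    ← SS_shift (n - 1) (a + 1) (a + 2) (-1), ← finsum_add_distrib (tm_fin _ _ _ _ 0 _) (tm_fin _ _ _ _ 0 _),
    ← finsum_add_distrib (fin_add (tm_fin _ _ _ _ 0 _) (tm_fin _ _ _ _ 0 _)) (tm_fin _ _ _ _ 0 _)]
  unfold SS
  congr 1; ext1 k
  unfold tm
  rw [MM_rec2 _ _ _ (by omega), mul_add, mul_add, one_mul]
  simp only [← mul_assoc, ← zpow_add₀ qq_ne]
  congr 1
  · congr 1
    · ring_nf
    · ring_nf
  · ring_nf

lemma SS_symm (n a : ℤ) : SS n (-a) (-a) = SS n a a := by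
  rw [← one_mul (SS n (-a) (-a)), ← SS_shift n (-a) (-a) a]
  unfold SS
  congr 1; ext1 k
  unfold tm
  rw [MM_comm12 k]
  ring_nf

lemma SS_symm' (n a : ℤ) : SS n (a - 1) a = qq ^ a * SS n (-a - 1) (-a) := by
  rw [← SS_shift n (-a - 1) (-a) a]
  unfold SS
  congr 1; ext1 k
  unfold tm
  rw [MM_comm12 k, ← mul_assoc, ← zpow_add₀ qq_ne]
  ring_nf

/-- the Andrews–Baxter identity -/
lemma SS_AB (n a : ℤ) : SS n a a + qq ^ n * SS n a (a + 1) =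
    SS n (a + 1) (a + 1) + qq ^ (n - a) * SS n (a - 1) a := by
  let g : ℤ → RatFunc ℚ := fun k => qq ^ (k * (k + a)) * ((1 - qq ^ k) * MM k (k + a) (n - 2 * k - a))
  have gfin : ∀ c, (fun k => g (k + c)).HasFiniteSupport := fun c => by
    refine fin_of _ (-(c.natAbs : ℤ) - (n.natAbs : ℤ) - (a.natAbs : ℤ)) ((c.natAbs : ℤ) + (n.natAbs : ℤ) + (a.natAbs : ℤ)) fun k hk => ?_
    simp only [g]
    rw [MM_zero _ _ _ (by omega)]
    simp
  have hg : ∑ᶠ k, g (k + 1) = ∑ᶠ k, g (k + 0) := by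
    have h := finsum_comp_equiv (Equiv.addRight (1 : ℤ)) (f := g)
    simpa using h
  have key : SS n a a + qq ^ n * SS n a (a + 1) + ∑ᶠ k, g (k + 1) =
    SS n (a + 1) (a + 1) + qq ^ (n - a) * SS n (a - 1) a + ∑ᶠ k, g (k + 0) := by
    rw [← one_mul (SS n a a), ← one_mul (SS n (a + 1) (a + 1)), ← SS_shift n a a 0,
      ← SS_shift n a (a + 1) 0, ← SS_shift n (a + 1) (a + 1) 0, ← SS_shift n (a - 1) a 0,
      ← finsum_add_distrib (tm_fin _ _ _ _ 0 _) (tm_fin _ _ _ _ 0 _),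
      ← finsum_add_distrib (tm_fin _ _ _ _ 0 _) (tm_fin _ _ _ _ 0 _),
      ← finsum_add_distrib (fin_add (tm_fin _ _ _ _ 0 _) (tm_fin _ _ _ _ 0 _)) (gfin _),
      ← finsum_add_distrib (fin_add (tm_fin _ _ _ _ 0 _) (tm_fin _ _ _ _ 0 _)) (gfin _)]
    congr 1; ext1 k
    simp only [g, tm, add_zero, one_mul]
    have m1 := MM_k (k + 1) (k + 1 + a) (n - 2 * (k + 1) - a)
    have m2 := MM_r k (k + 1 + a) (n - 2 * k - a - 1)
    have m3 := MM_l k (k + 1 + a) (n - 2 * k - a - 1)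
    have m4 := MM_r k (k + a) (n - 2 * k - a)
    rw [show k + 1 - 1 = k by ring, show k + 1 + (k + 1 + a) + (n - 2 * (k + 1) - a) = n by ring] at m1
    rw [show n - 2 * k - a - 1 - 1 = n - 2 * (k + 1) - a by ring,
      show k + (k + 1 + a) + (n - 2 * k - a - 1) = n by ring, m1] at m2
    rw [show k + (k + 1 + a) + (n - 2 * k - a - 1) = n by ring,
      show k + 1 + a - 1 = k + a by ring] at m3
    rw [show k + (k + a) + (n - 2 * k - a) = n by ring, m3] at m4
    rw [m2, show k + (a + 1) = k + 1 + a by ring, show n - 2 * k - (a + 1) = n - 2 * k - a - 1 by ring]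
    generalize MM k (k + 1 + a) (n - 2 * k - a - 1) = Y at *
    generalize MM k (k + a) (n - 2 * k - a) = X at *
    rw [show (k + 1) * (k + 1 + a) = k * (k + a) + (k + (k + a + 1)) by ring,
      show k * (k + 1 + a) = k * (k + a) + k by ring,
      show k * (k + (a - 1)) = k * (k + a) - k by ring,
      show n - 2 * k - a - 1 = n - (k + (k + a + 1)) by ring]
    rw [show k + 1 + a = k + a + 1 by ring, show n - 2 * k - a = n - (k + k + a) by ring] at m4
    simp only [zpow_add₀ qq_ne, zpow_sub₀ qq_ne, zpow_one] at m4 ⊢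
    have q0 := qq_ne
    have qk := zpow_ne_zero k qq_ne
    have qa := zpow_ne_zero a qq_ne
    have qn := zpow_ne_zero n qq_ne
    generalize qq ^ (k * (k + a)) = W at *
    generalize qq ^ k = K at *
    generalize qq ^ a = A at *
    generalize qq ^ n = N at *
    field_simp at m4 ⊢
    linear_combination (-W) * m4
  rw [hg] at key
  exact add_right_cancel key

lemma SS_D (n a : ℤ) (h0 : n ≠ 0) (h1 : n ≠ 1) : SS n a a = SS (n - 1) a a +
    qq ^ (n - 1) * SS (n - 2) a a + qq ^ (n - a) * SS (n - 1) (a - 1) (a - 1) +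
    qq ^ (n + a) * (SS (n - 2) (a + 1) (a + 1) + qq ^ (n - 2) * SS (n - 2) (a + 1) (a + 2)) := by
  rw [SS_R1 n a h0, SS_R2 (n - 1) a (by omega), show n - 1 - 1 = n - 2 by ring]
  simp only [mul_add, ← mul_assoc, ← zpow_add₀ qq_ne]
  rw [show n - 1 + (a + 1) = n + a by ring, show n - 1 + (n - 1 + a) = n + a + (n - 2) by ring]
  ring

/-- right side summand -/
noncomputable def UT (L j : ℤ) : RatFunc ℚ :=
  qq ^ (j * (10 * j + 1)) * SS L (5 * j) (5 * j) -
          qq ^ ((2 * j + 1) * (5 * j + 2)) * SS L (5 * j + 2) (5 * j + 2)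

lemma UT_zero (L j : ℤ) (h : ¬ (-L ≤ j ∧ j ≤ L)) : UT L j = 0 := by
  unfold UT
  rw [SS_zero _ _ _ (by omega), SS_zero _ _ _ (by omega)]
  simp

lemma UT_fin (L : ℤ) (x : RatFunc ℚ) : (fun j => x * UT L j).HasFiniteSupport :=
  fin_of _ (-L) L fun j hj => by rw [UT_zero _ _ hj, mul_zero]

lemma U_rec (L : ℤ) (h0 : L ≠ 0) (h1 : L ≠ 1) :
    ∑ᶠ j, UT L j = ∑ᶠ j, UT (L - 1) j + qq ^ (L - 1) * ∑ᶠ j, UT (L - 2) j := by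
  let A : ℤ → RatFunc ℚ := fun j =>
    qq ^ (L + 10 * j ^ 2 - 4 * j) * SS (L - 1) (5 * j - 1) (5 * j - 1)
  let B : ℤ → RatFunc ℚ := fun j => qq ^ (L + 10 * j ^ 2 + 6 * j) *
    (SS (L - 2) (5 * j + 1) (5 * j + 1) + qq ^ (L - 2) * SS (L - 2) (5 * j + 1) (5 * j + 2))
  have hA : A.HasFiniteSupport := fin_of _ (-(L.natAbs : ℤ) - 5) ((L.natAbs : ℤ) + 5) fun j hj => by
    simp only [A]; rw [SS_zero _ _ _ (by omega), mul_zero]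
  have hA' : (fun j => A (-j)).HasFiniteSupport := fin_of _ (-(L.natAbs : ℤ) - 5) ((L.natAbs : ℤ) + 5) fun j hj => by
    simp only [A]; rw [SS_zero _ _ _ (by omega), mul_zero]
  have hB : B.HasFiniteSupport := fin_of _ (-(L.natAbs : ℤ) - 5) ((L.natAbs : ℤ) + 5) fun j hj => by
    simp only [B]; rw [SS_zero _ _ _ (by omega), SS_zero _ _ _ (by omega)]; simp
  have hB' : (fun j => B (-1 - j)).HasFiniteSupport := fin_of _ (-(L.natAbs : ℤ) - 5) ((L.natAbs : ℤ) + 5) fun j hj => by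
    simp only [B]; rw [SS_zero _ _ _ (by omega), SS_zero _ _ _ (by omega)]; simp
  have sA : ∑ᶠ j, A (-j) = ∑ᶠ j, A j := finsum_comp_equiv (Equiv.neg ℤ) (f := A)
  have sB : ∑ᶠ j, B (-1 - j) = ∑ᶠ j, B j := finsum_comp_equiv (Equiv.subLeft (-1 : ℤ)) (f := B)
  have hterm : ∀ j, UT L j + (A (-j) + B (-1 - j)) =
      (1 * UT (L - 1) j + qq ^ (L - 1) * UT (L - 2) j) + (A j + B j) := by
    intro j
    have d1 := SS_D L (5 * j) h0 h1
    have d2 := SS_D L (5 * j + 2) h0 h1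
    have a1 : A j = qq ^ (j * (10 * j + 1)) * (qq ^ (L - 5 * j) * SS (L - 1) (5 * j - 1) (5 * j - 1)) := by
      simp only [A]; rw [← mul_assoc, ← zpow_add₀ qq_ne]; ring_nf
    have a2 : A (-j) = qq ^ ((2 * j + 1) * (5 * j + 2)) * (qq ^ (L - (5 * j + 2)) *
        SS (L - 1) (5 * j + 2 - 1) (5 * j + 2 - 1)) := by
      simp only [A]; rw [← mul_assoc, ← zpow_add₀ qq_ne, ← SS_symm]; ring_nf
    have b1 : B j = qq ^ (j * (10 * j + 1)) * (qq ^ (L + 5 * j) *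
        (SS (L - 2) (5 * j + 1) (5 * j + 1) + qq ^ (L - 2) * SS (L - 2) (5 * j + 1) (5 * j + 2))) := by
      simp only [B]; rw [← mul_assoc, ← zpow_add₀ qq_ne]; ring_nf
    have b2 : B (-1 - j) = qq ^ ((2 * j + 1) * (5 * j + 2)) * (qq ^ (L + (5 * j + 2)) *
        (SS (L - 2) (5 * j + 2 + 1) (5 * j + 2 + 1) +
          qq ^ (L - 2) * SS (L - 2) (5 * j + 2 + 1) (5 * j + 2 + 2))) := by
      have ab := SS_AB (L - 2) (5 * (-1 - j) + 1)
      simp only [B]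
      rw [show 5 * (-1 - j) + 2 = 5 * (-1 - j) + 1 + 1 by ring, ab, SS_symm', ← SS_symm]
      rw [← mul_assoc (qq ^ _) (qq ^ _) (SS _ _ _), ← zpow_add₀ qq_ne,
        ← mul_assoc (qq ^ ((2 * j + 1) * (5 * j + 2))), ← zpow_add₀ qq_ne]
      ring_nf
    rw [a1, a2, b1, b2]
    unfold UT
    linear_combination qq ^ (j * (10 * j + 1)) * d1 - qq ^ ((2 * j + 1) * (5 * j + 2)) * d2
  have hs := finsum_congr hterm
  rw [finsum_add_distrib (by simpa using UT_fin L 1) (fin_add hA' hB'), finsum_add_distrib hA' hB',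
    finsum_add_distrib (fin_add (UT_fin _ _) (UT_fin _ _)) (fin_add hA hB), finsum_add_distrib hA hB,
    finsum_add_distrib (UT_fin _ _) (UT_fin _ _), sA, sB] at hs
  have hs := add_right_cancel hs
  rw [hs, mul_finsum]
  simp

/-- left side summand -/
noncomputable def FT (L n : ℤ) : RatFunc ℚ := qq ^ (n ^ 2) * MM 0 n (L - 2 * n)

lemma FT_zero (L n : ℤ) (h : ¬ (0 ≤ n ∧ n ≤ L)) : FT L n = 0 := by
  unfold FT
  rw [MM_zero _ _ _ (by omega), mul_zero]

lemma FT_fin (L c : ℤ) (x : RatFunc ℚ) : (fun j => x * FT L (j + c)).HasFiniteSupport :=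
  fin_of _ (- c) (L - c) fun j hj => by rw [FT_zero _ _ (by omega), mul_zero]

lemma F_rec (L : ℤ) (h0 : L ≠ 0) :
    ∑ᶠ j, FT L j = ∑ᶠ j, FT (L - 1) j + qq ^ (L - 1) * ∑ᶠ j, FT (L - 2) j := by
  have h := finsum_comp_equiv (Equiv.addRight (-1 : ℤ)) (f := FT (L - 2))
  simp only [Equiv.coe_addRight] at h
  have e : ∑ᶠ j, FT (L - 1) j = ∑ᶠ j, 1 * FT (L - 1) (j + 0) := by simp
  rw [← h, mul_finsum, e,
    ← finsum_add_distrib (FT_fin _ _ _) (FT_fin _ _ _)]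
  congr 1; ext1 k
  unfold FT
  by_cases hk : L - k = 0
  · rw [MM_zero _ _ _ (by omega), MM_zero _ _ _ (by omega), MM_zero _ _ _ (by omega)]; simp
  rw [MM_rec _ _ _ (by omega), MM_zero (0 - 1) _ _ (by omega)]
  simp only [mul_zero, add_zero, one_mul, mul_add, ← mul_assoc, ← zpow_add₀ qq_ne]
  ring_nf

lemma MM_one (r : ℤ) (hr : 0 ≤ r) : MM 0 0 r = 1 := by
  unfold MM
  rw [if_pos (by omega)]
  have := qPoch_ne_s11 r.toNat
  have h0 : qPoch qq 0 = 1 := by simp [qPoch]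
  simp [h0, this]

lemma base (L : ℤ) (h : L = 0 ∨ L = 1) : ∑ᶠ j, FT L j = ∑ᶠ j, UT L j := by
  have e1 : ∑ᶠ j, FT L j = FT L 0 := finsum_eq_single _ _ fun n hn => by
    unfold FT; rw [MM_zero _ _ _ (by omega), mul_zero]
  have e2 : ∑ᶠ j, UT L j = UT L 0 := finsum_eq_single _ _ fun n hn => by
    unfold UT; rw [SS_zero _ _ _ (by omega), SS_zero _ _ _ (by omega)]; simp
  have e3 : SS L 0 0 = tm L 0 0 0 := finsum_eq_single _ _ fun n hn => by
    unfold tm; rw [MM_zero _ _ _ (by omega), mul_zero]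
  rw [e1, e2]
  unfold FT UT
  rw [SS_zero L (5 * 0 + 2) _ (by omega)]
  simp [e3, tm]

lemma FU (L : ℕ) : ∑ᶠ j, FT L j = ∑ᶠ j, UT L j := by
  induction L using Nat.strong_induction_on with
  | _ L ih =>
    by_cases h : L ≤ 1
    · exact base L (by omega)
    · rw [F_rec L (by omega), U_rec L (by omega) (by omega)]
      have h1 := ih (L - 1) (by omega)
      have h2 := ih (L - 2) (by omega)
      rw [Nat.cast_sub (by omega)] at h1 h2
      push_cast at h1 h2
      rw [h1, h2]

lemma qBin_eq_s11 (n k : ℤ) : qBin qq n k = MM 0 k (n - k) := by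
  unfold qBin MM
  have h0 : qPoch qq 0 = 1 := by simp [qPoch]
  by_cases h : 0 ≤ k ∧ k ≤ n
  · rw [if_pos h, if_pos (by omega)]
    simp [h0]
  · rw [if_neg h, if_neg (by omega)]

lemma qBin_mul (n k l : ℤ) : qBin qq n k * qBin qq (n - k) l = MM k l (n - k - l) := by
  unfold qBin MM
  by_cases h : 0 ≤ k ∧ 0 ≤ l ∧ 0 ≤ n - k - l
  · rw [if_pos (by omega), if_pos (by omega), if_pos h, show k + l + (n - k - l) = n by ring]
    have := qPoch_ne_s11 k.toNat
    have := qPoch_ne_s11 l.toNat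
    have := qPoch_ne_s11 (n - k).toNat
    have := qPoch_ne_s11 (n - k - l).toNat
    field_simp
  · rw [if_neg h]
    by_cases hk : 0 ≤ k ∧ k ≤ n
    · rw [if_neg (show ¬ (0 ≤ l ∧ l ≤ n - k) by omega), mul_zero]
    · rw [if_neg hk, zero_mul]

lemma finsum_range (f : ℤ → RatFunc ℚ) (L : ℕ) (h : ∀ k, ¬ (0 ≤ k ∧ k ≤ (L : ℤ)) → f k = 0) :
    ∑ᶠ k, f k = ∑ n ∈ Finset.range (L + 1), f n := by
  rw [finsum_eq_sum_of_support_subset (s := (Finset.range (L + 1)).map Nat.castEmbedding) f]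
  · simp
  · intro k hk
    have : 0 ≤ k ∧ k ≤ (L : ℤ) := by
      by_contra hc; exact hk (h k hc)
    simp only [Finset.coe_map, Set.mem_image, Finset.mem_coe, Finset.mem_range]
    exact ⟨k.toNat, by omega, by simp [this.1]⟩

lemma qTri_eq (L : ℕ) (b a : ℤ) : qTri qq L b a = SS L b a := by
  unfold SS
  rw [finsum_range _ L fun k hk => by unfold tm; rw [MM_zero _ _ _ (by omega), mul_zero]]
  unfold qTri
  refine Finset.sum_congr rfl fun k _ => ?_
  rw [mul_assoc, qBin_mul, tm]
  ring_nf

theorem stmt11 (L : ℕ) :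
    ∑ n ∈ Finset.range (L + 1), qq ^ (n ^ 2) * qBin qq ((L : ℤ) - n) (n : ℤ) =
      ∑ j ∈ Finset.Icc (-(L : ℤ)) (L : ℤ),
        (qq ^ (j * (10 * j + 1)) * qTri qq L (5 * j) (5 * j) -
          qq ^ ((2 * j + 1) * (5 * j + 2)) * qTri qq L (5 * j + 2) (5 * j + 2)) := by
  have h1 := finsum_range (FT L) L (FT_zero L)
  have h2 : ∑ᶠ j, UT L j = ∑ j ∈ Finset.Icc (-(L : ℤ)) (L : ℤ), UT L j := by
    apply finsum_eq_sum_of_support_subset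
    intro k hk
    simp only [Finset.coe_Icc, Set.mem_Icc]
    by_contra hc
    exact hk (UT_zero _ _ hc)
  have h3 := FU L
  rw [h1, h2] at h3
  simp only [qTri_eq]
  refine Eq.trans (Finset.sum_congr rfl fun k _ => ?_) h3
  rw [qBin_eq_s11, FT, ← zpow_natCast]
  push_cast
  ring_nf
end
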